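/- Assume (H) and that B(t) > 0 for all t. Let a < b be real numbers with A(a) = A(b) = 0 and A(t) > 0 for all t ∈ (a, b). Then there exists a C¹ solution x* of (N) on (a, b) such that x*(t) < 0 for all t ∈ (a, b), lim_{t→a⁺} x*(t) = 0, and lim_{t→a⁺} x*′(t) = B(a)/2 − √(B(a)²/4 + A′(a)). -/

import Mathlib

open Set Filter Topology

/-!
Put `y = -x > 0`. The equation becomes `y' = A / y - B + C y`, and the integrating factor
`E = exp (∫ C)` turns it, through `y = E W`, into `W' = A₁ / W - B₁` with `A₁ = A / E ^ 2` and
`B₁ = B / E`; these have the same `A₁(a) = 0`, `A₁'(a) = A'(a)` and `B₁(a) = B(a)`. So it suffices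
to treat `C = 0`.

Let `K = B(a) / 2 + √(B(a) ^ 2 / 4 + A'(a))`, so that `K (K - B(a)) = A'(a)`; here `A'(a) ≥ 0`
because `A > 0` to the right of `a`. The required solution behaves like `A / K` at `a`: for `q > K`
the function `A / q` is a strict subsolution near `a`, and for `0 < q < K` a strict supersolution
(`lower_barrier`, `upper_barrier`). Moreover `c A` is a subsolution on all of `[a, b]` for `c`
small, which keeps solutions positive and makes the truncated equation solvable in one
Picard-Lindelöf step (`exists_solution_Icc`).

Solve on `[s, r]` with `a < s < r < b`, starting from `A(s) / K`, and let `s → a`, `r → b`. Distances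
between positive solutions decrease in time (`solutions_contract`), and at time `s` the
approximations differ by at most a multiple of `A(s) → 0`; hence they converge, uniformly on compact
subsets of `(a, b)`, to a solution `W` (`exists_solution_of_C_eq_zero`). The barriers pass to the
limit and give `A / W → K`, so `W → 0` and `W' → K - B(a) = -(B(a) / 2 - √(B(a) ^ 2 / 4 + A'(a)))`.
-/

/-- A function differentiable on `[s, r]` has the corresponding right derivative on `[s, r)`. -/
lemma hasDerivWithinAt_Ici_of_Icc {w : ℝ → ℝ} {s r t d : ℝ}
    (h : HasDerivWithinAt w d (Icc s r) t) (ht : t ∈ Ico s r) :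
    HasDerivWithinAt w d (Ici t) t := by
  refine h.mono_of_mem_nhdsWithin ?_
  exact mem_of_superset (Icc_mem_nhdsGE ht.2) (Icc_subset_Icc_left ht.1)

/-- A multiple `c * A` that is a strict subsolution where it touches `w` stays below `w`. -/
lemma lower_barrier {A w w' : ℝ → ℝ} {s r c : ℝ} (hA : Differentiable ℝ A)
    (hw : ∀ t ∈ Icc s r, HasDerivWithinAt w (w' t) (Icc s r) t)
    (hbar : ∀ t ∈ Icc s r, c * A t = w t → c * deriv A t < w' t)
    (h0 : c * A s ≤ w s) : ∀ t ∈ Icc s r, c * A t ≤ w t := by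
  have key := image_le_of_deriv_right_lt_deriv_boundary' (f := fun t => c * A t)
    (f' := fun t => c * deriv A t) (a := s) (b := r) (B := w) (B' := w')
    (hA.continuous.const_smul c).continuousOn
    (fun x _ => ((hA x).hasDerivAt.const_mul c).hasDerivWithinAt) h0
    (fun t ht => (hw t ht).continuousWithinAt)
    (fun t ht => hasDerivWithinAt_Ici_of_Icc (hw t (Ico_subset_Icc_self ht)) ht)
    (fun t ht => hbar t (Ico_subset_Icc_self ht))
  exact fun t ht => key ht

/-- A multiple `c * A` that is a strict supersolution where it touches `w` stays above `w`. -/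
lemma upper_barrier {A w w' : ℝ → ℝ} {s r c : ℝ} (hA : Differentiable ℝ A)
    (hw : ∀ t ∈ Icc s r, HasDerivWithinAt w (w' t) (Icc s r) t)
    (hbar : ∀ t ∈ Icc s r, w t = c * A t → w' t < c * deriv A t)
    (h0 : w s ≤ c * A s) : ∀ t ∈ Icc s r, w t ≤ c * A t := by
  have key := image_le_of_deriv_right_lt_deriv_boundary' (f := w)
    (f' := w') (a := s) (b := r) (B := fun t => c * A t) (B' := fun t => c * deriv A t)
    (fun t ht => (hw t ht).continuousWithinAt)
    (fun t ht => hasDerivWithinAt_Ici_of_Icc (hw t (Ico_subset_Icc_self ht)) ht) h0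
    (hA.continuous.const_smul c).continuousOn
    (fun x _ => ((hA x).hasDerivAt.const_mul c).hasDerivWithinAt)
    (fun t ht => hbar t (Ico_subset_Icc_self ht))
  exact fun t ht => key ht

/-- Since `w ↦ A / w` is decreasing, two positive solutions of `w' = A / w - B` approach each
other. -/
lemma solutions_contract {A B v w : ℝ → ℝ} {s r : ℝ}
    (hApos : ∀ t ∈ Icc s r, 0 < A t)
    (hv : ∀ t ∈ Icc s r, HasDerivWithinAt v (A t / v t - B t) (Icc s r) t)
    (hw : ∀ t ∈ Icc s r, HasDerivWithinAt w (A t / w t - B t) (Icc s r) t)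
    (hvpos : ∀ t ∈ Icc s r, 0 < v t) (hwpos : ∀ t ∈ Icc s r, 0 < w t) :
    ∀ t ∈ Icc s r, |v t - w t| ≤ |v s - w s| := by
  have hanti : AntitoneOn (fun t => (v t - w t) ^ 2) (Icc s r) := by
    have hd : ∀ t ∈ Icc s r, HasDerivWithinAt (fun t => (v t - w t) ^ 2)
        (2 * (v t - w t) * ((A t / v t - B t) - (A t / w t - B t))) (Icc s r) t := by
      intro t ht
      exact HasDerivWithinAt.congr_deriv (((hv t ht).sub (hw t ht)).pow 2) (by simp)
    refine antitoneOn_of_hasDerivWithinAt_nonpos (convex_Icc s r)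
      (fun t ht => (hd t ht).continuousWithinAt)
      (fun t ht => (hd t (interior_subset ht)).mono interior_subset) ?_
    intro t ht
    have ht := interior_subset ht
    have h1 := hvpos t ht
    have h2 := hwpos t ht
    have h3 := hApos t ht
    have : 2 * (v t - w t) * ((A t / v t - B t) - (A t / w t - B t))
        = - (2 * A t * (v t - w t) ^ 2 / (v t * w t)) := by
      field_simp
      ring
    rw [this, neg_nonpos]
    positivity
  intro t ht
  have hs : s ∈ Icc s r := ⟨le_rfl, ht.1.trans ht.2⟩
  exact sq_le_sq.mp (hanti hs ht ht.1)

/-- Solvability of `w' = A / w - B` on a compact interval where `A > 0`. The vector field is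
truncated below the barrier `c * A`, which makes it globally bounded and Lipschitz, so that a
single Picard-Lindelöf step covers the whole interval; the solution stays above the barrier,
where the truncation has no effect. -/
lemma exists_solution_Icc {A B : ℝ → ℝ} {s r c w₀ : ℝ} (hsr : s ≤ r) (hc : 0 < c)
    (hA : Differentiable ℝ A) (hB : Continuous B)
    (hApos : ∀ t ∈ Icc s r, 0 < A t)
    (hbar : ∀ t ∈ Icc s r, c * deriv A t < 1 / c - B t)
    (h0 : c * A s ≤ w₀) :
    ∃ w : ℝ → ℝ, w s = w₀ ∧ (∀ t ∈ Icc s r, c * A t ≤ w t) ∧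
      ∀ t ∈ Icc s r, HasDerivWithinAt w (A t / w t - B t) (Icc s r) t := by
  obtain ⟨t₁, ht₁, hmin⟩ := isCompact_Icc.exists_isMinOn (nonempty_Icc.2 hsr)
    hA.continuous.continuousOn
  obtain ⟨M, hM⟩ := isCompact_Icc.exists_bound_of_continuousOn (hB.continuousOn (s := Icc s r))
  have hM0 : 0 ≤ M := (norm_nonneg _).trans (hM s ⟨le_rfl, hsr⟩)
  have hm : 0 < A t₁ := hApos t₁ ht₁
  set F : ℝ → ℝ → ℝ := fun t y => A t / max y (c * A t) - B t with hF
  have hmaxpos : ∀ t ∈ Icc s r, ∀ y, 0 < max y (c * A t) := fun t ht y =>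
    lt_max_of_lt_right (mul_pos hc (hApos t ht))
  have hL0 : 0 ≤ 1 / c + M := by positivity
  have hlip : ∀ t ∈ Icc s r, ∀ x y, |F t x - F t y| ≤ 1 / (c ^ 2 * A t₁) * |x - y| := by
    intro t ht x y
    have hx := hmaxpos t ht x
    have hy := hmaxpos t ht y
    have hAt := hApos t ht
    have hAm : A t₁ ≤ A t := hmin ht
    have e : F t x - F t y = A t / (max x (c * A t) * max y (c * A t)) *
        (max y (c * A t) - max x (c * A t)) := by
      simp only [hF]; field_simp; ring
    rw [e, abs_mul]
    have h1 : |max y (c * A t) - max x (c * A t)| ≤ |x - y| := by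
      rw [abs_sub_comm x y]; exact abs_max_sub_max_le_abs _ _ _
    have h2 : |A t / (max x (c * A t) * max y (c * A t))| ≤ 1 / (c ^ 2 * A t₁) := by
      rw [abs_of_pos (by positivity), div_le_div_iff₀ (by positivity) (by positivity)]
      have h3 : (c * A t) * (c * A t) ≤ max x (c * A t) * max y (c * A t) :=
        mul_le_mul (le_max_right _ _) (le_max_right _ _) (by positivity) hx.le
      have h4 : A t * A t₁ ≤ A t * A t := by gcongr
      nlinarith [mul_le_mul_of_nonneg_left h4 (sq_nonneg c)]
    gcongr
  have hPL : IsPicardLindelof F (⟨s, le_rfl, hsr⟩ : Icc s r) w₀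
      (Real.toNNReal ((1 / c + M) * (r - s))) 0 (Real.toNNReal (1 / c + M))
      (Real.toNNReal (1 / (c ^ 2 * A t₁))) := by
    refine ⟨?_, ?_, ?_, ?_⟩
    · intro t ht
      refine LipschitzOnWith.of_dist_le_mul fun x _ y _ => ?_
      rw [Real.coe_toNNReal _ (by positivity)]
      exact hlip t ht x y
    · intro x _
      refine ContinuousOn.sub (ContinuousOn.div hA.continuous.continuousOn ?_ ?_) hB.continuousOn
      · exact (continuous_const.max (continuous_const.mul hA.continuous)).continuousOn
      · exact fun t ht => (hmaxpos t ht x).ne'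
    · intro t ht x _
      rw [Real.coe_toNNReal _ hL0]
      refine (norm_sub_le _ _).trans (add_le_add ?_ (hM t ht))
      have hAt := hApos t ht
      rw [Real.norm_eq_abs, abs_of_pos (div_pos hAt (hmaxpos t ht x)),
        div_le_div_iff₀ (hmaxpos t ht x) hc]
      linarith [le_max_right x (c * A t)]
    · have hd : 0 ≤ r - s := sub_nonneg.2 hsr
      rw [Real.coe_toNNReal _ hL0, Real.coe_toNNReal _ (mul_nonneg hL0 hd)]
      simp [hd]
  obtain ⟨w, hw0, hw⟩ := hPL.exists_eq_forall_mem_Icc_hasDerivWithinAt₀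
  have hlow : ∀ t ∈ Icc s r, c * A t ≤ w t := by
    refine lower_barrier hA hw ?_ (by simpa [hw0] using h0)
    intro t ht e
    have hAt := hApos t ht
    have : F t (w t) = 1 / c - B t := by
      simp only [hF, ← e, max_self]; field_simp
    rw [this]; exact hbar t ht
  refine ⟨w, hw0, hlow, fun t ht => ?_⟩
  have := hw t ht
  simpa only [hF, max_eq_left (hlow t ht)] using this

/-- The case `C = 0`, after the sign change `W = -x`. The constant `K` is the larger root of
`K (K - B a) = A'(a)`, and `A / W → K` encodes `W' → K - B a`. -/
lemma exists_solution_of_C_eq_zero {A B : ℝ → ℝ} {a b K : ℝ} (hab : a < b)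
    (hA : ContDiff ℝ 1 A) (hB : Continuous B) (hAa : A a = 0)
    (hApos : ∀ t ∈ Ioo a b, 0 < A t)
    (hK : 0 < K) (hBK : B a ≤ K) (hKeq : K * (K - B a) = deriv A a) :
    ∃ W : ℝ → ℝ, (∀ t ∈ Ioo a b, 0 < W t) ∧
      (∀ t ∈ Ioo a b, HasDerivAt W (A t / W t - B t) t) ∧
      Tendsto W (𝓝[>] a) (𝓝 0) ∧
      Tendsto (fun t => A t / W t) (𝓝[>] a) (𝓝 K) := by
  have hAd : Differentiable ℝ A := hA.differentiable one_ne_zero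
  have hA' : Continuous (deriv A) := hA.continuous_deriv_one
  -- A constant `c₀` for which `c₀ * A` is a lower barrier on all of `[a, b]`.
  obtain ⟨M₁, hM₁⟩ := isCompact_Icc.exists_bound_of_continuousOn (hB.continuousOn (s := Icc a b))
  obtain ⟨M₂, hM₂⟩ := isCompact_Icc.exists_bound_of_continuousOn (hA'.continuousOn (s := Icc a b))
  have hM₁0 : 0 ≤ M₁ := (norm_nonneg _).trans (hM₁ a ⟨le_rfl, hab.le⟩)
  have hM₂0 : 0 ≤ M₂ := (norm_nonneg _).trans (hM₂ a ⟨le_rfl, hab.le⟩)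
  obtain ⟨c₀, hc₀, hc₀K, hbar₀⟩ : ∃ c : ℝ, 0 < c ∧ c ≤ 1 / K ∧
      ∀ t ∈ Icc a b, c * deriv A t < 1 / c - B t := by
    refine ⟨1 / (K + M₁ + M₂ + 1), by positivity, ?_, fun t ht => ?_⟩
    · exact one_div_le_one_div_of_le hK (by linarith)
    · have h1 := (abs_le.1 (hM₁ t ht)).2
      have h2 := (abs_le.1 (hM₂ t ht)).2
      have h3 : 1 / (K + M₁ + M₂ + 1) * deriv A t ≤ 1 * M₂ := by
        have h4 : 1 / (K + M₁ + M₂ + 1) ≤ 1 := by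
          rw [div_le_one (by positivity)]; linarith
        calc _ ≤ 1 / (K + M₁ + M₂ + 1) * M₂ := by gcongr
          _ ≤ _ := by gcongr
      rw [one_div_one_div]
      linarith
  -- Exhaustion of `(a, b)` by the compact intervals `[s n, r n]`.
  set d : ℕ → ℝ := fun n => (b - a) / (n + 3) with hd
  have hba : 0 < b - a := sub_pos.2 hab
  have hd0 : ∀ n, 0 < d n := fun n => by simp only [hd]; positivity
  have hdanti : ∀ n m, n ≤ m → d m ≤ d n := fun n m h => by
    simp only [hd]; gcongr
  have hdhalf : ∀ n, d n + d n < b - a := fun n => by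
    simp only [hd]
    rw [← add_div, div_lt_iff₀ (by positivity)]
    nlinarith [mul_nonneg hba.le (Nat.cast_nonneg (α := ℝ) n)]
  have hdlim : Tendsto d atTop (𝓝 0) := by
    refine Tendsto.div_atTop tendsto_const_nhds ?_
    exact tendsto_atTop_add_const_right _ _ tendsto_natCast_atTop_atTop
  set s : ℕ → ℝ := fun n => a + d n with hs
  set r : ℕ → ℝ := fun n => b - d n with hr
  have hsr : ∀ n, s n ≤ r n := fun n => by simp only [hs, hr]; linarith [hdhalf n]
  have hsub : ∀ n, Icc (s n) (r n) ⊆ Ioo a b := fun n t ht => by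
    have := hd0 n
    simp only [hs, hr, mem_Icc] at ht
    exact ⟨by linarith [ht.1], by linarith [ht.2]⟩
  have hmono : ∀ n m, n ≤ m → Icc (s n) (r n) ⊆ Icc (s m) (r m) := fun n m h => by
    have := hdanti n m h
    refine Icc_subset_Icc ?_ ?_ <;> simp only [hs, hr] <;> linarith
  have hslim : Tendsto s atTop (𝓝[>] a) := by
    refine tendsto_nhdsWithin_iff.2 ⟨?_, Eventually.of_forall fun n => ?_⟩
    · simpa [hs] using hdlim.const_add a
    · simp [hs, hd0 n]
  have hrlim : Tendsto r atTop (𝓝 b) := by simpa [hr] using hdlim.const_sub b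
  have hexh : ∀ α β, a < α → β < b → ∀ᶠ n in atTop, Icc α β ⊆ Icc (s n) (r n) := by
    intro α β hα hβ
    filter_upwards [(tendsto_nhdsWithin_iff.1 hslim).1.eventually (gt_mem_nhds hα),
      hrlim.eventually (lt_mem_nhds hβ)] with n h1 h2
    exact Icc_subset_Icc h1.le h2.le
  have hpos : ∀ n, ∀ t ∈ Icc (s n) (r n), 0 < A t := fun n t ht => hApos t (hsub n ht)
  have hsmem : ∀ n, s n ∈ Icc (s n) (r n) := fun n => ⟨le_rfl, hsr n⟩
  -- The approximating solutions start at `s n` from the value `A / K`.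
  have hex : ∀ n, ∃ w : ℝ → ℝ, w (s n) = A (s n) / K ∧
      (∀ t ∈ Icc (s n) (r n), c₀ * A t ≤ w t) ∧
      ∀ t ∈ Icc (s n) (r n), HasDerivWithinAt w (A t / w t - B t) (Icc (s n) (r n)) t := by
    intro n
    refine exists_solution_Icc (hsr n) hc₀ hAd hB (hpos n)
      (fun t ht => hbar₀ t (Ioo_subset_Icc_self (hsub n ht))) ?_
    have := mul_le_mul_of_nonneg_right hc₀K (hpos n _ (hsmem n)).le
    rwa [one_div, inv_mul_eq_div] at this
  choose w hw0 hwlow hwd using hex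
  have hwpos : ∀ n, ∀ t ∈ Icc (s n) (r n), 0 < w n t := fun n t ht =>
    (mul_pos hc₀ (hpos n t ht)).trans_le (hwlow n t ht)
  -- For `q > K` the function `A / q` is a subsolution near `a`, as `q (q - B a) > deriv A a`;
  -- for `q < K` it is a supersolution.
  have hlow : ∀ q, K < q → ∀ᶠ t in 𝓝[>] a, ∀ n, t ∈ Icc (s n) (r n) → A t ≤ q * w n t := by
    intro q hq
    have hq0 : 0 < q := hK.trans hq
    have h1 : ∀ᶠ t in 𝓝 a, deriv A t < q * (q - B t) := by
      refine hA'.continuousAt.eventually_lt (by fun_prop) ?_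
      rw [← hKeq]; nlinarith
    obtain ⟨δ, hδ, hδ'⟩ := Metric.eventually_nhds_iff.1 h1
    filter_upwards [Ioo_mem_nhdsGT (show a < a + δ by linarith)] with t ht n htn
    have hsb : Icc (s n) t ⊆ Icc (s n) (r n) := Icc_subset_Icc_right htn.2
    have key := lower_barrier (c := 1 / q) hAd (fun x hx => (hwd n x (hsb hx)).mono hsb)
      (fun x hx e => by
        have hx0 : a < x := (hsub n (hsb hx)).1
        have hx1 : deriv A x < q * (q - B x) := hδ' (by
          rw [Real.dist_eq, abs_of_pos (by linarith)]; linarith [hx.2, ht.2])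
        have hAx := hpos n x (hsb hx)
        rw [← e, one_div, inv_mul_eq_div, inv_mul_eq_div, div_div_cancel₀ hAx.ne', div_lt_iff₀ hq0]
        linarith)
      (by rw [hw0, one_div, inv_mul_eq_div]
          exact div_le_div_of_nonneg_left (hpos n _ (hsmem n)).le hK hq.le) t ⟨htn.1, le_rfl⟩
    rw [one_div, inv_mul_eq_div, div_le_iff₀ hq0] at key
    linarith
  have hup : ∀ q, 0 < q → q < K →
      ∀ᶠ t in 𝓝[>] a, ∀ n, t ∈ Icc (s n) (r n) → q * w n t ≤ A t := by
    intro q hq0 hq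
    have h1 : ∀ᶠ t in 𝓝 a, q * (q - B t) < deriv A t := by
      refine ContinuousAt.eventually_lt (by fun_prop) hA'.continuousAt ?_
      rw [← hKeq]; nlinarith
    obtain ⟨δ, hδ, hδ'⟩ := Metric.eventually_nhds_iff.1 h1
    filter_upwards [Ioo_mem_nhdsGT (show a < a + δ by linarith)] with t ht n htn
    have hsb : Icc (s n) t ⊆ Icc (s n) (r n) := Icc_subset_Icc_right htn.2
    have key := upper_barrier (c := 1 / q) hAd (fun x hx => (hwd n x (hsb hx)).mono hsb)
      (fun x hx e => by
        have hx0 : a < x := (hsub n (hsb hx)).1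
        have hx1 : q * (q - B x) < deriv A x := hδ' (by
          rw [Real.dist_eq, abs_of_pos (by linarith)]; linarith [hx.2, ht.2])
        have hAx := hpos n x (hsb hx)
        rw [e, one_div, inv_mul_eq_div, inv_mul_eq_div, div_div_cancel₀ hAx.ne',
          lt_div_iff₀ hq0]
        linarith)
      (by rw [hw0, one_div, inv_mul_eq_div]
          exact div_le_div_of_nonneg_left (hpos n _ (hsmem n)).le hq0 hq.le) t ⟨htn.1, le_rfl⟩
    rw [one_div, inv_mul_eq_div, le_div_iff₀ hq0] at key
    linarith
  -- The approximations are uniformly Cauchy, with rate `η n`.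
  set η : ℕ → ℝ := fun n => 2 / K * A (s n) with hη
  have hηlim : Tendsto η atTop (𝓝 0) := by
    have h1 : Tendsto A (𝓝[>] a) (𝓝 0) := by
      simpa [hAa] using (hAd.continuous.tendsto a).mono_left nhdsWithin_le_nhds
    simpa using (h1.comp hslim).const_mul (2 / K)
  have hcauchy : ∀ᶠ n in atTop, ∀ m, n ≤ m → ∀ t ∈ Icc (s n) (r n),
      |w m t - w n t| ≤ η n := by
    filter_upwards [hslim.eventually (hup (K / 2) (by positivity) (by linarith))]
      with n hn m hnm t ht
    have hsb := hmono n m hnm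
    refine (solutions_contract (hpos n) (fun x hx => (hwd m x (hsb hx)).mono hsb) (hwd n)
      (fun x hx => hwpos m x (hsb hx)) (hwpos n) t ht).trans ?_
    have h1 := hn m (hsb (hsmem n))
    have h2 := hn n (hsmem n)
    have h3 := hwpos m _ (hsb (hsmem n))
    have h4 := hwpos n _ (hsmem n)
    have h5 : ∀ y, K / 2 * y ≤ A (s n) → y ≤ η n := fun y hy => by
      simp only [hη]
      rw [div_mul_eq_mul_div, le_div_iff₀ hK]; linarith
    exact abs_le.2 ⟨by linarith [h5 _ h2], by linarith [h5 _ h1]⟩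
  have hlim : ∀ t ∈ Ioo a b, ∃ y, Tendsto (fun n => w n t) atTop (𝓝 y) := by
    intro t ht
    refine cauchySeq_tendsto_of_complete (Metric.cauchySeq_iff'.2 fun ε hε => ?_)
    obtain ⟨N, h1, h2, h3⟩ := (hcauchy.and
      ((hexh t t ht.1 ht.2).and (hηlim.eventually (gt_mem_nhds hε)))).exists
    exact ⟨N, fun m hm => (h1 m hm t (h2 ⟨le_rfl, le_rfl⟩)).trans_lt h3⟩
  choose! W hW using hlim
  have hev : ∀ t ∈ Ioo a b, ∀ᶠ n in atTop, t ∈ Icc (s n) (r n) := fun t ht =>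
    (hexh t t ht.1 ht.2).mono fun n hn => hn ⟨le_rfl, le_rfl⟩
  have hWlow : ∀ t ∈ Ioo a b, c₀ * A t ≤ W t := fun t ht =>
    ge_of_tendsto (hW t ht) ((hev t ht).mono fun n hn => hwlow n t hn)
  have hWpos : ∀ t ∈ Ioo a b, 0 < W t := fun t ht =>
    (mul_pos hc₀ (hApos t ht)).trans_le (hWlow t ht)
  have hrate : ∀ᶠ n in atTop, ∀ t ∈ Icc (s n) (r n), |W t - w n t| ≤ η n := by
    filter_upwards [hcauchy] with n hn t ht
    refine le_of_tendsto ((hW t (hsub n ht)).sub_const (w n t)).abs ?_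
    filter_upwards [eventually_ge_atTop n] with m hm using hn m hm t ht
  have hIoo : ∀ᶠ t in 𝓝[>] a, t ∈ Ioo a b := Ioo_mem_nhdsGT hab
  have hWq : ∀ q, K < q → ∀ᶠ t in 𝓝[>] a, A t ≤ q * W t := by
    intro q hq
    filter_upwards [hlow q hq, hIoo] with t h1 ht
    exact ge_of_tendsto ((hW t ht).const_mul q) ((hev t ht).mono fun n hn => h1 n hn)
  have hWq' : ∀ q, 0 < q → q < K → ∀ᶠ t in 𝓝[>] a, q * W t ≤ A t := by
    intro q hq0 hq
    filter_upwards [hup q hq0 hq, hIoo] with t h1 ht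
    exact le_of_tendsto ((hW t ht).const_mul q) ((hev t ht).mono fun n hn => h1 n hn)
  refine ⟨W, hWpos, ?_, ?_, ?_⟩
  · intro t ht
    obtain ⟨α, hα, hαt⟩ := exists_between ht.1
    obtain ⟨β, htβ, hβ⟩ := exists_between ht.2
    obtain ⟨t₁, ht₁, hmin⟩ := isCompact_Icc.exists_isMinOn
      (nonempty_Icc.2 (hαt.trans htβ).le) hAd.continuous.continuousOn
    have hm : 0 < A t₁ := hApos t₁ ⟨hα.trans_le ht₁.1, ht₁.2.trans_lt hβ⟩
    refine hasDerivAt_of_tendstoUniformlyOn (l := atTop) (f := w)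
      (f' := fun n x => A x / w n x - B x) (g' := fun x => A x / W x - B x)
      isOpen_Ioo (s := Ioo α β) ?_ ?_ ?_ ⟨hαt, htβ⟩
    · refine Metric.tendstoUniformlyOn_iff.2 fun ε hε => ?_
      filter_upwards [hrate, hexh α β hα hβ,
        hηlim.eventually (gt_mem_nhds (show 0 < ε * (c₀ ^ 2 * A t₁) by positivity))]
        with n h1 h2 h3 x hx
      have hx' := Ioo_subset_Icc_self hx
      have hxn := h2 hx'
      have hAx := hpos n x hxn
      have hAm : A t₁ ≤ A x := hmin hx'
      have hwx := hwpos n x hxn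
      have hWx := hWpos x (hsub n hxn)
      have e : A x / W x - B x - (A x / w n x - B x)
          = A x / (W x * w n x) * (w n x - W x) := by field_simp; ring
      have h4 : A x / (W x * w n x) ≤ 1 / (c₀ ^ 2 * A t₁) := by
        rw [div_le_div_iff₀ (by positivity) (by positivity)]
        have h5 : (c₀ * A x) * (c₀ * A x) ≤ W x * w n x :=
          mul_le_mul (hWlow x (hsub n hxn)) (hwlow n x hxn) (by positivity) hWx.le
        have h6 : A x * A t₁ ≤ A x * A x := by gcongr
        nlinarith [mul_le_mul_of_nonneg_left h6 (sq_nonneg c₀)]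
      rw [Real.dist_eq, e, abs_mul, abs_of_pos (by positivity), abs_sub_comm]
      calc _ ≤ 1 / (c₀ ^ 2 * A t₁) * η n := by gcongr; exact h1 x hxn
        _ < ε := by rw [one_div, inv_mul_eq_div, div_lt_iff₀ (by positivity)]; exact h3
    · filter_upwards [hexh α β hα hβ] with n hn x hx
      refine (hwd n x (hn (Ioo_subset_Icc_self hx))).hasDerivAt ?_
      exact mem_of_superset (Icc_mem_nhds hx.1 hx.2) hn
    · exact fun x hx => hW x ⟨hα.trans hx.1, hx.2.trans hβ⟩
  · have h1 : Tendsto (fun t => 2 / K * A t) (𝓝[>] a) (𝓝 0) := by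
      have : Tendsto A (𝓝[>] a) (𝓝 0) := by
        simpa [hAa] using (hAd.continuous.tendsto a).mono_left nhdsWithin_le_nhds
      simpa using this.const_mul (2 / K)
    refine tendsto_of_tendsto_of_tendsto_of_le_of_le' tendsto_const_nhds h1
      (hIoo.mono fun t ht => (hWpos t ht).le) ?_
    filter_upwards [hWq' (K / 2) (by positivity) (by linarith)] with t ht
    rw [div_mul_eq_mul_div, le_div_iff₀ hK]; linarith
  · refine tendsto_order.2 ⟨fun q hq => ?_, fun q hq => ?_⟩
    · obtain ⟨p, hp, hpK⟩ := exists_between (max_lt hq hK)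
      filter_upwards [hWq' p ((le_max_right _ _).trans_lt hp) hpK, hIoo] with t h1 ht
      exact ((le_max_left _ _).trans_lt hp).trans_le ((le_div_iff₀ (hWpos t ht)).2 h1)
    · obtain ⟨p, hp, hpq⟩ := exists_between hq
      filter_upwards [hWq p hp, hIoo] with t h1 ht
      exact ((div_le_iff₀ (hWpos t ht)).2 h1).trans_lt hpq

lemma deriv_nonneg_of_pos_right {A : ℝ → ℝ} {a b : ℝ} (hab : a < b)
    (hA : DifferentiableAt ℝ A a) (hAa : A a = 0) (hApos : ∀ t ∈ Ioo a b, 0 < A t) :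
    0 ≤ deriv A a := by
  have h := (hasDerivWithinAt_iff_tendsto_slope' (s := Ioi a) (by simp)).1
    hA.hasDerivAt.hasDerivWithinAt
  refine ge_of_tendsto h ?_
  filter_upwards [Ioo_mem_nhdsGT hab] with t ht
  rw [slope_def_field, hAa, sub_zero]
  exact (div_pos (hApos t ht) (sub_pos.2 ht.1)).le

/-- under (H) with B > 0, between consecutive zeros a < b of A with A > 0 on (a,b),
there is a negative C¹ solution x* of (N) on (a,b) with x*(t) → 0 and
x*′(t) → B(a)/2 − √(B(a)²/4 + A′(a)) as t → a⁺. -/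
theorem negative_solution_from_left_zero
    (T : ℝ) (hT : 0 < T) (A B C : ℝ → ℝ)
    (hA : ContDiff ℝ 1 A) (hB : ContDiff ℝ 1 B) (hC : ContDiff ℝ 1 C)
    (hAper : Function.Periodic A T) (hBper : Function.Periodic B T)
    (hCper : Function.Periodic C T)
    (hzero : ∃ t ∈ Icc (0 : ℝ) T, A t = 0)
    (hcond : (sInf ((fun t => |B t|) '' Icc (0 : ℝ) T)) ^ 2 >
      -4 * sInf ((fun t => deriv A t) '' Icc (0 : ℝ) T) *
        (1 + T * sSup ((fun t => |C t|) '' Icc (0 : ℝ) T)))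
    (hBpos : ∀ t : ℝ, 0 < B t)
    (a b : ℝ) (hab : a < b) (hAa : A a = 0) (hAb : A b = 0)
    (hApos : ∀ t ∈ Ioo a b, 0 < A t) :
    ∃ x : ℝ → ℝ, ContDiffOn ℝ 1 x (Ioo a b) ∧
      (∀ t ∈ Ioo a b, x t * deriv x t = A t + B t * x t + C t * x t ^ 2) ∧
      (∀ t ∈ Ioo a b, x t < 0) ∧
      Tendsto x (𝓝[>] a) (𝓝 0) ∧
      Tendsto (deriv x) (𝓝[>] a)
        (𝓝 (B a / 2 - Real.sqrt (B a ^ 2 / 4 + deriv A a))) := by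
  have hAd : Differentiable ℝ A := hA.differentiable one_ne_zero
  have hm : 0 ≤ deriv A a := deriv_nonneg_of_pos_right hab (hAd a) hAa hApos
  set S := Real.sqrt (B a ^ 2 / 4 + deriv A a) with hS
  have hS2 : S ^ 2 = B a ^ 2 / 4 + deriv A a := Real.sq_sqrt (by positivity)
  have hSB : B a / 2 ≤ S := Real.le_sqrt_of_sq_le (by
    linarith [show (B a / 2) ^ 2 = B a ^ 2 / 4 by ring])
  have hBa := hBpos a
  -- The integrating factor `E = exp (∫ C)` removes the term `C x ^ 2`.
  set E : ℝ → ℝ := fun t => Real.exp (∫ u in a..t, C u) with hE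
  have hEpos : ∀ t, 0 < E t := fun t => Real.exp_pos _
  have hEa : E a = 1 := by simp [hE]
  have hEd : ∀ t, HasDerivAt E (E t * C t) t := fun t =>
    (hC.continuous.integral_hasStrictDerivAt a t).hasDerivAt.exp
  have hEcont : Continuous E := continuous_iff_continuousAt.2 fun t => (hEd t).continuousAt
  have hEC1 : ContDiff ℝ 1 E := by
    refine contDiff_one_iff_deriv.2 ⟨fun t => (hEd t).differentiableAt, ?_⟩
    rw [show deriv E = fun t => E t * C t from funext fun t => (hEd t).deriv]
    exact hEcont.mul hC.continuous
  have hA₁' : deriv (fun t => A t / E t ^ 2) a = deriv A a := by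
    have h := (hAd a).hasDerivAt.div ((hEd a).pow 2) (by simp [hEa])
    exact h.deriv.trans (by simp [hEa, hAa])
  obtain ⟨W, hWpos, hWd, hW0, hWK⟩ := exists_solution_of_C_eq_zero
    (A := fun t => A t / E t ^ 2) (B := fun t => B t / E t) (K := B a / 2 + S) hab
    (hA.div (hEC1.pow 2) fun t => (pow_pos (hEpos t) 2).ne')
    (hB.continuous.div hEcont fun t => (hEpos t).ne') (by simp [hAa])
    (fun t ht => div_pos (hApos t ht) (pow_pos (hEpos t) 2)) (by linarith)
    (by simp only [hEa, div_one]; linarith)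
    (by rw [hA₁', hEa, div_one]; linear_combination hS2)
  have hxd : ∀ t ∈ Ioo a b, HasDerivAt (fun t => -(E t * W t))
      (-(C t * (E t * W t)) - E t * (A t / E t ^ 2 / W t) + B t) t := by
    intro t ht
    refine ((hEd t).mul (hWd t ht)).neg.congr_deriv ?_
    have h1 := (hEpos t).ne'
    have h2 := (hWpos t ht).ne'
    field_simp
    ring
  have hx0 : Tendsto (fun t => E t * W t) (𝓝[>] a) (𝓝 0) := by
    simpa [hEa] using ((hEcont.tendsto a).mono_left nhdsWithin_le_nhds).mul hW0
  refine ⟨fun t => -(E t * W t), ?_, ?_, ?_, by simpa using hx0.neg, ?_⟩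
  · have hWc : ContinuousOn W (Ioo a b) := fun t ht => (hWd t ht).continuousAt.continuousWithinAt
    rw [show (1 : WithTop ℕ∞) = 0 + 1 from rfl, contDiffOn_succ_iff_deriv_of_isOpen isOpen_Ioo]
    refine ⟨fun t ht => (hxd t ht).differentiableAt.differentiableWithinAt, by simp, ?_⟩
    rw [contDiffOn_zero]
    refine ContinuousOn.congr ?_ fun t ht => (hxd t ht).deriv
    have h1 := hC.continuous.continuousOn (s := Ioo a b)
    have h2 := hEcont.continuousOn (s := Ioo a b)
    have h3 := hA.continuous.continuousOn (s := Ioo a b)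
    have h4 := hB.continuous.continuousOn (s := Ioo a b)
    exact (((h1.mul (h2.mul hWc)).neg.sub (h2.mul ((h3.div (h2.pow 2)
      fun t _ => (pow_pos (hEpos t) 2).ne').div hWc fun t ht => (hWpos t ht).ne')))).add h4
  · intro t ht
    rw [(hxd t ht).deriv]
    have h1 := (hEpos t).ne'
    have h2 := (hWpos t ht).ne'
    field_simp
    ring
  · exact fun t ht => neg_neg_of_pos (mul_pos (hEpos t) (hWpos t ht))
  · have hcont : ∀ f : ℝ → ℝ, Continuous f → Tendsto f (𝓝[>] a) (𝓝 (f a)) := fun f hf =>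
      (hf.tendsto a).mono_left nhdsWithin_le_nhds
    have h := ((((hcont C hC.continuous).mul hx0).neg).sub
      ((hcont E hEcont).mul hWK)).add (hcont B hB.continuous)
    have e : -(C a * 0) - E a * (B a / 2 + S) + B a = B a / 2 - S := by rw [hEa]; ring
    rw [e] at h
    refine h.congr' ?_
    filter_upwards [Ioo_mem_nhdsGT hab] with t ht using (hxd t ht).deriv.symm
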